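/- Let X be a compact metric space and φ : ℝ × X → X a continuous flow, and let P denote the topological pressure of the flow. Then for all f, ω ∈ C(X, ℝ) and every t₀ ∈ ℝ one has P(f + ω ∘ φ^{t₀}) = P(f + ω). In particular the functional Q_f(ω) := P(f + ω) − P(f) (when P(f) is finite) satisfies Q_f(ω ∘ φ^{t₀}) = Q_f(ω). -/

import Mathlib

open MeasureTheory Filter Topology ENNReal NNReal

/-- `E` is a `(t, ε)`-separated set for the flow `φ`: distinct points of `E` are moved at
distance `> ε` apart at some time `s ∈ [0, t]`. -/
def IsSeparatedSet {X : Type*} [MetricSpace X] (φ : ℝ → C(X, X)) (t ε : ℝ) (E : Set X) : Prop :=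
  ∀ x ∈ E, ∀ y ∈ E, x ≠ y → ∃ s ∈ Set.Icc (0 : ℝ) t, ε < dist (φ s x) (φ s y)

/-- The topological pressure of a continuous function `f` for the flow `φ`, with values in
`[-∞, ∞]`. -/
noncomputable def pressure {X : Type*} [MetricSpace X] (φ : ℝ → C(X, X)) (f : C(X, ℝ)) : EReal :=
  ⨆ (ε : ℝ) (_ : 0 < ε),
    Filter.limsup (fun t : ℝ =>
      ((1 / t : ℝ) : EReal) *
        ENNReal.log (⨆ (E : Finset X) (_ : IsSeparatedSet φ t ε (E : Set X)),
          ENNReal.ofReal (∑ x ∈ E, Real.exp (∫ s in (0 : ℝ)..t, f (φ s x))))) Filter.atTop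

lemma pressure_le_aux {X : Type*} [MetricSpace X] (φ : ℝ → C(X, X)) (F G : C(X, ℝ)) (C : ℝ)
    (h : ∀ t x, (∫ s in (0 : ℝ)..t, F (φ s x)) ≤ C + ∫ s in (0 : ℝ)..t, G (φ s x)) :
    pressure φ F ≤ pressure φ G := by
  unfold pressure
  refine iSup₂_mono fun ε _ => ?_
  set A : C(X, ℝ) → ℝ → ℝ≥0∞ := fun F t =>
    ⨆ (E : Finset X) (_ : IsSeparatedSet φ t ε (E : Set X)),
          ENNReal.ofReal (∑ x ∈ E, Real.exp (∫ s in (0 : ℝ)..t, F (φ s x))) with hA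
  change limsup (fun t : ℝ => ((1 / t : ℝ) : EReal) * ENNReal.log (A F t)) atTop ≤
    limsup (fun t : ℝ => ((1 / t : ℝ) : EReal) * ENNReal.log (A G t)) atTop
  have h1 : ∀ t, A F t ≤ ENNReal.ofReal (Real.exp C) * A G t := by
    intro t
    refine iSup₂_le fun E hE => ?_
    calc ENNReal.ofReal (∑ x ∈ E, Real.exp (∫ s in (0 : ℝ)..t, F (φ s x)))
        ≤ ENNReal.ofReal (Real.exp C * ∑ x ∈ E, Real.exp (∫ s in (0 : ℝ)..t, G (φ s x))) := by
          refine ENNReal.ofReal_le_ofReal ?_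
          rw [Finset.mul_sum]
          refine Finset.sum_le_sum fun x _ => ?_
          rw [← Real.exp_add]
          exact Real.exp_le_exp.2 (h t x)
      _ = ENNReal.ofReal (Real.exp C) *
            ENNReal.ofReal (∑ x ∈ E, Real.exp (∫ s in (0 : ℝ)..t, G (φ s x))) :=
          ENNReal.ofReal_mul (Real.exp_pos C).le
      _ ≤ _ := by
          gcongr
          exact le_iSup₂ (f := fun (E : Finset X) (_ : IsSeparatedSet φ t ε (E : Set X)) =>
            ENNReal.ofReal (∑ x ∈ E, Real.exp (∫ s in (0 : ℝ)..t, G (φ s x)))) E hE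
  have hC : ENNReal.log (ENNReal.ofReal (Real.exp C)) = (C : EReal) := by
    rw [ENNReal.log_ofReal_of_pos (Real.exp_pos C), Real.log_exp]
  have h2 : ∀ t : ℝ, 0 < t → ((1 / t : ℝ) : EReal) * ENNReal.log (A F t) ≤
      ((1 / t * C : ℝ) : EReal) + ((1 / t : ℝ) : EReal) * ENNReal.log (A G t) := by
    intro t ht
    have ht' : (0 : EReal) ≤ ((1 / t : ℝ) : EReal) := by
      exact_mod_cast (one_div_pos.2 ht).le
    have h3 : ENNReal.log (A F t) ≤ (C : EReal) + ENNReal.log (A G t) := by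
      rw [← hC, ← ENNReal.log_mul_add]
      exact ENNReal.log_monotone (h1 t)
    refine (mul_le_mul_of_nonneg_left h3 ht').trans ?_
    rw [EReal.left_distrib_of_nonneg_of_ne_top ht' (EReal.coe_ne_top _), EReal.coe_mul]
  have h4 : limsup (fun t : ℝ => ((1 / t * C : ℝ) : EReal)) atTop = 0 := by
    apply Tendsto.limsup_eq
    have : Tendsto (fun t : ℝ => 1 / t * C) atTop (𝓝 0) := by
      simpa using (tendsto_inv_atTop_zero (𝕜 := ℝ)).mul_const C
    exact (continuous_coe_real_ereal.tendsto 0).comp this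
  calc limsup (fun t : ℝ => ((1 / t : ℝ) : EReal) * ENNReal.log (A F t)) atTop
      ≤ limsup ((fun t : ℝ => ((1 / t * C : ℝ) : EReal)) +
          (fun t : ℝ => ((1 / t : ℝ) : EReal) * ENNReal.log (A G t))) atTop := by
        refine limsup_le_limsup ?_
        filter_upwards [eventually_gt_atTop 0] with t ht using h2 t ht
    _ ≤ _ := EReal.limsup_add_le (by rw [h4]; simp) (by rw [h4]; simp)
    _ = _ := by rw [h4, zero_add]

lemma pressure_flow_aux {X : Type*} [MetricSpace X] [CompactSpace X]
    (φ : ℝ → C(X, X))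
    (hφcont : Continuous fun p : ℝ × X => φ p.1 p.2)
    (hφadd : ∀ s t : ℝ, φ (s + t) = (φ s).comp (φ t))
    (f ω : C(X, ℝ)) (t₀ t : ℝ) (x : X) :
    |(∫ s in (0 : ℝ)..t, (f + ω.comp (φ t₀)) (φ s x)) - ∫ s in (0 : ℝ)..t, (f + ω) (φ s x)|
      ≤ 2 * (‖ω‖ * |t₀|) := by
  have hc : Continuous fun s => φ s x := hφcont.comp (by fun_prop : Continuous fun s : ℝ => (s, x))
  have hω : Continuous fun s => ω (φ s x) := ω.continuous.comp hc
  have hf : Continuous fun s => f (φ s x) := f.continuous.comp hc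
  have e : ∀ s, (ω.comp (φ t₀)) (φ s x) = ω (φ (s + t₀) x) := by
    intro s; rw [add_comm, hφadd]; rfl
  have hω' : Continuous fun s => ω (φ (s + t₀) x) := hω.comp (continuous_add_const t₀)
  simp only [ContinuousMap.add_apply, e]
  rw [intervalIntegral.integral_add (hf.intervalIntegrable _ _) (hω'.intervalIntegrable _ _),
    intervalIntegral.integral_add (hf.intervalIntegrable _ _) (hω.intervalIntegrable _ _),
    intervalIntegral.integral_comp_add_right (fun s => ω (φ s x)) t₀, add_sub_add_left_eq_sub,
    intervalIntegral.integral_interval_sub_interval_comm (hω.intervalIntegrable _ _)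
      (hω.intervalIntegrable _ _) (hω.intervalIntegrable _ _)]
  have b : ∀ a b : ℝ, |∫ s in a..b, ω (φ s x)| ≤ ‖ω‖ * |b - a| := fun a b =>
    intervalIntegral.norm_integral_le_of_norm_le_const fun s _ => ω.norm_coe_le_norm _
  have b1 := b (0 + t₀) 0
  have b2 := b (t + t₀) t
  rw [show (0:ℝ) - (0 + t₀) = -t₀ by ring, abs_neg] at b1
  rw [show t - (t + t₀) = -t₀ by ring, abs_neg] at b2
  refine (abs_sub _ _).trans ?_
  linarith

/-- For a continuous flow `φ` on a compact metric space, the topological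
pressure satisfies `P(f + ω ∘ φ^{t₀}) = P(f + ω)` for all `f, ω ∈ C(X,ℝ)` and `t₀ ∈ ℝ`;
in particular `Q_f(ω) := P(f + ω) - P(f)` satisfies `Q_f(ω ∘ φ^{t₀}) = Q_f(ω)`. -/
theorem pressure_flow_invariant
    {X : Type*} [MetricSpace X] [CompactSpace X]
    (φ : ℝ → C(X, X))
    (hφcont : Continuous fun p : ℝ × X => φ p.1 p.2)
    (hφ0 : φ 0 = ContinuousMap.id X)
    (hφadd : ∀ s t : ℝ, φ (s + t) = (φ s).comp (φ t))
    (f ω : C(X, ℝ)) (t₀ : ℝ) :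
    pressure φ (f + ω.comp (φ t₀)) = pressure φ (f + ω) ∧
    (∀ p : ℝ, pressure φ f = (p : EReal) →
      pressure φ (f + ω.comp (φ t₀)) - pressure φ f = pressure φ (f + ω) - pressure φ f) := by
  have key : pressure φ (f + ω.comp (φ t₀)) = pressure φ (f + ω) := by
    have H := pressure_flow_aux φ hφcont hφadd f ω t₀
    apply le_antisymm
    · refine pressure_le_aux φ _ _ (2 * (‖ω‖ * |t₀|)) fun t x => ?_
      linarith [(abs_le.1 (H t x)).2]
    · refine pressure_le_aux φ _ _ (2 * (‖ω‖ * |t₀|)) fun t x => ?_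
      linarith [(abs_le.1 (H t x)).1]
  exact ⟨key, fun p _ => by rw [key]⟩
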